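/- arXiv:1309.0441 — 2 statements merged into one kernel-verified Lean document; each statement's English description precedes it below -/
import Mathlib

section
/- Let p be a prime with p ≡ 3 (mod 4) and let k ∈ ℚ. Then there exist x, y, z ∈ ℚ with 2 + p·k² + p·z² = x² + y² if and only if the denominator of k (in lowest terms) is divisible neither by p nor by 2 (equivalently, v_p(k) ≥ 0 and v_2(k) ≥ 0). -/
/-!
The prime `p` may be replaced by any squarefree `d ≡ 3 (mod 4)` all of whose prime factors are
`3` modulo `4`. If `2 + d k² + d z² = x² + y²`, clear denominators to get a *primitive* integral
solution of `X² + Y² = 2 D² + d (K² + Z²)`. If `l = 2` or `l` is a prime factor of `d`, then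
`l ∣ D` would force `l` to divide all of `X, Y, K, Z`; hence `l ∤ D`.

Conversely write `k = m / n` and put `N = 2 n² + d m²`; one must find `z` such that `N + d z²` is a
sum of two rational squares. Dirichlet's theorem and quadratic reciprocity provide a prime
`q ≡ 1 (mod 4)` for which Legendre's local conditions for `N w² + d z² = q u²` hold. Divide a
solution by `w` and use that `q` is a sum of two squares. For Legendre's theorem, the pigeonhole
principle yields a small vector on which `a w² + b z² - c u²` is a multiple of `a b c`; the bounds
leave only the multiples `0` and `a b c`.
-/

open scoped NumberTheorySymbols

section Legendre

theorem exists_ne_zero_map_eq_zero_abs_le {ι G : Type*} [Fintype ι] [AddCommGroup G] [Finite G]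
    (f : (ι → ℤ) →+ G) (B : ι → ℕ) (hB : Nat.card G < ∏ i, (B i + 1)) :
    ∃ x ≠ 0, f x = 0 ∧ ∀ i, |x i| ≤ B i := by
  classical
  have := Fintype.ofFinite G
  obtain ⟨v, hv, w, hw, hne, heq⟩ := Finset.exists_ne_map_eq_of_card_lt_of_maps_to
    (s := Finset.Icc (0 : ι → ℤ) fun i ↦ B i) (t := Finset.univ) (f := f)
    (by simpa [Pi.card_Icc, Nat.card_eq_fintype_card] using hB) (by simp)
  rw [Finset.mem_Icc] at hv hw
  refine ⟨v - w, sub_ne_zero.mpr hne, by rw [map_sub, heq, sub_self], fun i ↦ ?_⟩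
  simpa using abs_sub_le_of_nonneg_of_le (hv.1 i) (hv.2 i) (hw.1 i) (hw.2 i)

theorem mul_sq_eq_mul_sq_of_mul_eq_mul {R : Type*} [CommRing R] {b c r z u : R} (hb : IsUnit b)
    (hr : b * c = r * r) (h : b * z = r * u) : b * z ^ 2 = c * u ^ 2 :=
  hb.mul_left_cancel (by linear_combination (b * z + r * u) * h - u ^ 2 * hr)

theorem isSquare_of_mul_sq_eq_sq {n : ℕ} {x y : ℤ} (hx : x ≠ 0) (h : n * x ^ 2 = y ^ 2) :
    IsSquare n := by
  rw [← Rat.isSquare_natCast_iff]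
  have hxQ : (x : ℚ) ≠ 0 := mod_cast hx
  have hQ : (n : ℚ) * x ^ 2 = y ^ 2 := mod_cast h
  exact ⟨y / x, by field_simp; exact hQ⟩

variable {a b c : ℕ}

theorem mul_mul_lt_prod_sqrt_add_one (a b c : ℕ) :
    a * (b * c) < (Nat.sqrt (b * c) + 1) * (Nat.sqrt (c * a) + 1) * (Nat.sqrt (a * b) + 1) := by
  refine lt_of_mul_self_lt_mul_self₀ (Nat.zero_le _) ?_
  have hbc := Nat.lt_succ_sqrt (b * c)
  have hca := Nat.lt_succ_sqrt (c * a)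
  have hab := Nat.lt_succ_sqrt (a * b)
  calc
    a * (b * c) * (a * (b * c)) = b * c * (c * a) * (a * b) := by ring
    _ < (Nat.sqrt (b * c) + 1) * (Nat.sqrt (b * c) + 1) *
          ((Nat.sqrt (c * a) + 1) * (Nat.sqrt (c * a) + 1)) *
          ((Nat.sqrt (a * b) + 1) * (Nat.sqrt (a * b) + 1)) :=
      Nat.mul_lt_mul'' (Nat.mul_lt_mul'' hbc hca) hab
    _ = _ := by ring

theorem exists_ne_zero_mul_mul_dvd_sq_le (ha : 0 < a) (hb : 0 < b) (hc : 0 < c)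
    (hab : a.Coprime b) (hbc : b.Coprime c) (hca : c.Coprime a)
    (hsa : IsSquare (b * c : ZMod a)) (hsb : IsSquare (a * c : ZMod b))
    (hsc : IsSquare (-(a * b) : ZMod c)) :
    ∃ w z u : ℤ, (w ≠ 0 ∨ z ≠ 0 ∨ u ≠ 0) ∧ w ^ 2 ≤ b * c ∧ z ^ 2 ≤ c * a ∧ u ^ 2 ≤ a * b ∧
      (a * b * c : ℤ) ∣ a * w ^ 2 + b * z ^ 2 - c * u ^ 2 := by
  obtain ⟨r, hr⟩ := hsa
  obtain ⟨s, hs⟩ := hsb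
  obtain ⟨t, ht⟩ := hsc
  have : NeZero a := ⟨ha.ne'⟩
  have : NeZero b := ⟨hb.ne'⟩
  have : NeZero c := ⟨hc.ne'⟩
  let f : (Fin 3 → ℤ) →+ ZMod a × ZMod b × ZMod c := AddMonoidHom.mk'
    (fun v ↦ (b * v 1 - r * v 2, a * v 0 - s * v 2, a * v 0 - t * v 1))
    (fun v v' ↦ by ext <;> simp <;> ring)
  obtain ⟨v, hv0, hfv, hvB⟩ := exists_ne_zero_map_eq_zero_abs_le f
    ![Nat.sqrt (b * c), Nat.sqrt (c * a), Nat.sqrt (a * b)]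
    (by simpa [Fin.prod_univ_three] using mul_mul_lt_prod_sqrt_add_one a b c)
  have sq_le {x : ℤ} {n : ℕ} (h : |x| ≤ Nat.sqrt n) : x ^ 2 ≤ n :=
    (sq_le_sq' (abs_le.mp h).1 (abs_le.mp h).2).trans (mod_cast Nat.sqrt_le' n)
  simp only [f, AddMonoidHom.mk'_apply, Prod.mk_eq_zero, sub_eq_zero] at hfv
  obtain ⟨hfa, hfb, hfc⟩ := hfv
  have dvd_a : (a : ℤ) ∣ a * v 0 ^ 2 + b * v 1 ^ 2 - c * v 2 ^ 2 := by
    rw [← ZMod.intCast_zmod_eq_zero_iff_dvd]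
    have hu : IsUnit (b : ZMod a) := (ZMod.isUnit_iff_coprime b a).mpr hab.symm
    simpa [sub_eq_zero] using mul_sq_eq_mul_sq_of_mul_eq_mul hu hr hfa
  have dvd_b : (b : ℤ) ∣ a * v 0 ^ 2 + b * v 1 ^ 2 - c * v 2 ^ 2 := by
    rw [← ZMod.intCast_zmod_eq_zero_iff_dvd]
    have hu : IsUnit (a : ZMod b) := (ZMod.isUnit_iff_coprime a b).mpr hab
    simpa [sub_eq_zero] using mul_sq_eq_mul_sq_of_mul_eq_mul hu hs hfb
  have dvd_c : (c : ℤ) ∣ a * v 0 ^ 2 + b * v 1 ^ 2 - c * v 2 ^ 2 := by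
    rw [← ZMod.intCast_zmod_eq_zero_iff_dvd]
    have hu : IsUnit (a : ZMod c) := (ZMod.isUnit_iff_coprime a c).mpr hca.symm
    simpa [add_eq_zero_iff_eq_neg] using
      mul_sq_eq_mul_sq_of_mul_eq_mul (c := -(b : ZMod c)) hu (by rw [mul_neg, ht]) hfc
  refine ⟨v 0, v 1, v 2, ?_, mod_cast sq_le (hvB 0), mod_cast sq_le (hvB 1),
    mod_cast sq_le (hvB 2), ?_⟩
  · contrapose! hv0
    ext i
    fin_cases i <;> simp [hv0]
  · have hab' : IsCoprime (a : ℤ) b := Nat.isCoprime_iff_coprime.mpr hab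
    have habc : IsCoprime (a * b : ℤ) c :=
      (Nat.isCoprime_iff_coprime.mpr hca.symm).mul_left (Nat.isCoprime_iff_coprime.mpr hbc)
    exact habc.mul_dvd (hab'.mul_dvd dvd_a dvd_b) dvd_c

theorem exists_mul_sq_add_mul_sq_eq_mul_sq_of_not_isSquare (ha : 0 < a) (hb : 0 < b) (hc : 0 < c)
    (hab : a.Coprime b) (hbc : b.Coprime c) (hca : c.Coprime a)
    (hsa : IsSquare (b * c : ZMod a)) (hsb : IsSquare (a * c : ZMod b))
    (hsc : IsSquare (-(a * b) : ZMod c)) (hsq : ¬IsSquare (a * b)) :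
    ∃ w z u : ℤ, u ≠ 0 ∧ (a : ℤ) * w ^ 2 + b * z ^ 2 = c * u ^ 2 := by
  obtain ⟨w, z, u, hne, hw, hz, hu, e, he⟩ :=
    exists_ne_zero_mul_mul_dvd_sq_le ha hb hc hab hbc hca hsa hsb hsc
  zify at ha hb hc
  have habc : (0 : ℤ) < a * b * c := by positivity
  have hu_lt : u ^ 2 < (a * b : ℤ) := hu.lt_of_ne fun h ↦
    hsq (isSquare_of_mul_sq_eq_sq (x := 1) (y := u) one_ne_zero
      (by push_cast; linear_combination -h))
  have hwz : w ^ 2 < (b * c : ℤ) ∨ z ^ 2 < (c * a : ℤ) := by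
    by_contra! h
    refine hsq (isSquare_of_mul_sq_eq_sq (x := c) (y := w * z) hc.ne' ?_)
    push_cast
    rw [mul_pow, hw.antisymm h.1, hz.antisymm h.2]
    ring
  have haw : (a : ℤ) * w ^ 2 ≤ a * (b * c) := by gcongr
  have hbz : (b : ℤ) * z ^ 2 ≤ b * (c * a) := by gcongr
  have hcu : (c : ℤ) * u ^ 2 < c * (a * b) := by gcongr
  have haw0 : (0 : ℤ) ≤ a * w ^ 2 := by positivity
  have hbz0 : (0 : ℤ) ≤ b * z ^ 2 := by positivity
  have hcu0 : (0 : ℤ) ≤ c * u ^ 2 := by positivity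
  have he_lt : e < 2 := by
    refine lt_of_mul_lt_mul_left ?_ habc.le
    rcases hwz with h | h
    · have := mul_lt_mul_of_pos_left h ha
      linarith
    · have := mul_lt_mul_of_pos_left h hb
      linarith
  have he_gt : -1 < e := lt_of_mul_lt_mul_left (by linarith) habc.le
  obtain rfl | rfl : e = 0 ∨ e = 1 := by lia
  · refine ⟨w, z, u, ?_, by linear_combination he⟩
    rintro rfl
    have haw_eq : (a : ℤ) * w ^ 2 = 0 := by linarith
    have hbz_eq : (b : ℤ) * z ^ 2 = 0 := by linarith
    have hw0 : w = 0 := by simpa using (mul_eq_zero.mp haw_eq).resolve_left ha.ne'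
    have hz0 : z = 0 := by simpa using (mul_eq_zero.mp hbz_eq).resolve_left hb.ne'
    simp [hw0, hz0] at hne
  · -- The norm form of `ℚ(√(-ab))` is multiplicative, so `a w² + b z² = c (u² + ab)` may be
    -- multiplied by `u² + ab`.
    exact ⟨w * u + b * z, z * u - a * w, u ^ 2 + a * b, by positivity,
      by linear_combination (u ^ 2 + a * b : ℤ) * he⟩

theorem exists_mul_sq_add_mul_sq_eq_mul_sq_of_isSquare (ha : 0 < a) (hb : 0 < b)
    (hab : a.Coprime b) (hbc : b.Coprime c) (hca : c.Coprime a)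
    (hsc : IsSquare (-(a * b) : ZMod c)) (hsq : IsSquare (a * b)) :
    ∃ w z u : ℤ, u ≠ 0 ∧ (a : ℤ) * w ^ 2 + b * z ^ 2 = c * u ^ 2 := by
  obtain ⟨r, hr⟩ := hsq
  rw [← sq] at hr
  obtain ⟨α, rfl⟩ := exists_eq_pow_of_mul_eq_pow (Nat.isUnit_iff.mpr hab) hr
  obtain ⟨β, rfl⟩ := exists_eq_pow_of_mul_eq_pow (Nat.isUnit_iff.mpr hab.symm)
    ((mul_comm _ _).trans hr)
  have hu : IsUnit ((α : ZMod c) * β) := by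
    have hαc := hca.symm.coprime_dvd_left (Dvd.intro_left α (sq α).symm)
    have hβc := hbc.coprime_dvd_left (Dvd.intro_left β (sq β).symm)
    exact ((ZMod.isUnit_iff_coprime α c).mpr hαc).mul ((ZMod.isUnit_iff_coprime β c).mpr hβc)
  obtain ⟨t, ht⟩ := hsc
  have hneg : IsSquare (-1 : ZMod c) := by
    obtain ⟨v, hv⟩ := hu.exists_left_inv
    refine ⟨v * t, ?_⟩
    push_cast at ht
    linear_combination (v * (α * β) + 1) * hv + v ^ 2 * ht
  obtain ⟨x, y, rfl⟩ := Nat.eq_sq_add_sq_of_isSquare_mod_neg_one hneg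
  have hα : α ≠ 0 := by rintro rfl; simp at ha
  have hβ : β ≠ 0 := by rintro rfl; simp at hb
  exact ⟨β * x, α * y, α * β, mod_cast mul_ne_zero hα hβ, by push_cast; ring⟩

/-- Legendre's theorem on the equation `a w² + b z² = c u²`. -/
theorem exists_mul_sq_add_mul_sq_eq_mul_sq (ha : 0 < a) (hb : 0 < b) (hc : 0 < c)
    (hab : a.Coprime b) (hbc : b.Coprime c) (hca : c.Coprime a)
    (hsa : IsSquare (b * c : ZMod a)) (hsb : IsSquare (a * c : ZMod b))
    (hsc : IsSquare (-(a * b) : ZMod c)) :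
    ∃ w z u : ℤ, u ≠ 0 ∧ (a : ℤ) * w ^ 2 + b * z ^ 2 = c * u ^ 2 := by
  by_cases hsq : IsSquare (a * b)
  · exact exists_mul_sq_add_mul_sq_eq_mul_sq_of_isSquare ha hb hab hbc hca hsc hsq
  · exact exists_mul_sq_add_mul_sq_eq_mul_sq_of_not_isSquare ha hb hc hab hbc hca hsa hsb hsc hsq

end Legendre

section AuxiliaryPrime

theorem exists_prime_gt_forall_modEq {ι : Type*} [Finite ι] (m r : ι → ℕ) (hm : ∀ i, m i ≠ 0)
    (hcop : Pairwise fun i j ↦ (m i).Coprime (m j)) (hr : ∀ i, (r i).Coprime (m i)) (B : ℕ) :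
    ∃ q > B, q.Prime ∧ ∀ i, q ≡ r i [MOD m i] := by
  have := Fintype.ofFinite ι
  obtain ⟨s, hs⟩ := Nat.chineseRemainderOfFinset r m Finset.univ (fun i _ ↦ hm i)
    (hcop.set_pairwise _)
  have hsm : s.Coprime (∏ i, m i) := Nat.Coprime.prod_right fun i hi ↦ by
    rw [Nat.Coprime, (hs i hi).gcd_eq]
    exact hr i
  obtain ⟨q, hqB, hq, hqs⟩ := Nat.forall_exists_prime_gt_and_modEq B
    (Finset.prod_ne_zero_iff.mpr fun i _ ↦ hm i) hsm
  exact ⟨q, hqB, hq, fun i ↦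
    (hqs.of_dvd (Finset.dvd_prod_of_mem m (Finset.mem_univ i))).trans (hs i (Finset.mem_univ i))⟩

variable {a b : ℕ}

theorem exists_prime_gt_modEq_eight_and_modEq (ha : Odd a) (hb : Odd b) {c r : ℕ} (hr : Odd r)
    (hab : a.Coprime b) (hcb : c.Coprime b) (B : ℕ) :
    ∃ q > B, q.Prime ∧ q ≡ r [MOD 8] ∧ q ≡ b [MOD a] ∧ q ≡ c [MOD b] := by
  have coprime_eight {n : ℕ} (hn : Odd n) : Nat.Coprime 8 n :=
    Nat.Coprime.pow_left 3 (Nat.coprime_two_left.mpr hn)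
  obtain ⟨q, hqB, hq, h⟩ := exists_prime_gt_forall_modEq ![8, a, b] ![r, b, c]
    (by simp [Fin.forall_fin_succ, ha.pos.ne', hb.pos.ne'])
    (by
      have h8a := coprime_eight ha
      have h8b := coprime_eight hb
      intro i j hij
      fin_cases i <;> fin_cases j <;>
        first | exact absurd rfl hij | assumption | exact Nat.Coprime.symm ‹_›)
    (by simpa [Fin.forall_fin_succ] using ⟨(coprime_eight hr).symm, hab.symm, hcb⟩) B
  exact ⟨q, hqB, hq, h 0, h 1, h 2⟩

theorem jacobiSym_eq_of_modEq {q r : ℕ} (ha : Odd a) (hq : q % 4 = 1) (h : q ≡ r [MOD a]) :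
    J(a | q) = J(r | a) := by
  rw [jacobiSym.quadratic_reciprocity_one_mod_four' ha hq]
  exact jacobiSym.mod_left' (mod_cast h)

theorem exists_prime_gt_jacobiSym_mul_eq_one_of_mod_four_eq_one (ha : a % 4 = 1) (hb : Odd b)
    (hab : a.Coprime b) (B : ℕ) :
    ∃ q > B, q.Prime ∧ q % 4 = 1 ∧ q ≡ b [MOD a] ∧ q ≡ a [MOD b] ∧ J(a | q) * J(b | q) = 1 := by
  have ha' : Odd a := Nat.odd_iff.mpr (by lia)
  obtain ⟨q, hqB, hq, hq8, hqa, hqb⟩ :=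
    exists_prime_gt_modEq_eight_and_modEq ha' hb odd_one hab hab B
  have hq4 : q % 4 = 1 := hq8.of_dvd (by norm_num : 4 ∣ 8)
  refine ⟨q, hqB, hq, hq4, hqa, hqb, ?_⟩
  calc
    J(a | q) * J(b | q) = J(b | a) * J(a | b) := by
      rw [jacobiSym_eq_of_modEq ha' hq4 hqa, jacobiSym_eq_of_modEq hb hq4 hqb]
    _ = J(a | b) ^ 2 := by rw [jacobiSym.quadratic_reciprocity_one_mod_four ha hb, sq]
    _ = 1 := jacobiSym.sq_one (by simpa using hab)

theorem exists_prime_gt_jacobiSym_mul_eq_one_of_mod_four_eq_two (ha : a % 4 = 2) (hb : Odd b)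
    (hab : a.Coprime b) (B : ℕ) :
    ∃ q > B, q.Prime ∧ q % 4 = 1 ∧ q ≡ b [MOD a] ∧ q ≡ a [MOD b] ∧ J(a | q) * J(b | q) = 1 := by
  obtain ⟨m, rfl⟩ : 2 ∣ a := by lia
  have hm : Odd m := Nat.odd_iff.mpr (by lia)
  have hmb : m.Coprime b := hab.coprime_mul_left
  -- The residue of `q` modulo `8` may be `1` or `5`; the choice corrects the sign.
  obtain ⟨r, hr4, hr⟩ : ∃ r : ℕ, r % 4 = 1 ∧
      ZMod.χ₈ r * (J(b | m) * J((2 * m : ℕ) | b)) = 1 := by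
    have h₁ := jacobiSym.eq_one_or_neg_one (a := b) (b := m) (by simpa using hmb.symm)
    have h₂ := jacobiSym.eq_one_or_neg_one (a := (2 * m : ℕ)) (b := b)
      (by rwa [Int.gcd_natCast_natCast])
    have e₁ : ZMod.χ₈ (1 : ℕ) = 1 := by decide
    have e₅ : ZMod.χ₈ (5 : ℕ) = -1 := by decide
    obtain h | h : J(b | m) * J((2 * m : ℕ) | b) = 1 ∨ J(b | m) * J((2 * m : ℕ) | b) = -1 := by
      rcases h₁ with h₁ | h₁ <;> rcases h₂ with h₂ | h₂ <;> rw [h₁, h₂] <;> decide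
    · exact ⟨1, rfl, by rw [e₁, h, one_mul]⟩
    · exact ⟨5, rfl, by rw [e₅, h]; rfl⟩
  obtain ⟨q, hqB, hq, hq8, hqm, hqb⟩ :=
    exists_prime_gt_modEq_eight_and_modEq hm hb (r := r) (Nat.odd_iff.mpr (by lia)) hmb hab B
  have hq4 : q % 4 = 1 := Eq.trans (hq8.of_dvd (by norm_num : 4 ∣ 8)) hr4
  have hq_odd : Odd q := Nat.odd_iff.mpr (by lia)
  have hq2 : q ≡ b [MOD 2] := (Nat.odd_iff.mp hq_odd).trans (Nat.odd_iff.mp hb).symm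
  refine ⟨q, hqB, hq, hq4, (Nat.modEq_and_modEq_iff_modEq_mul (Nat.coprime_two_left.mpr hm)).mp
    ⟨hq2, hqm⟩, hqb, ?_⟩
  calc
    J((2 * m : ℕ) | q) * J(b | q) = J(2 | q) * J(m | q) * J(b | q) := by
      rw [Nat.cast_mul, jacobiSym.mul_left, Nat.cast_two]
    _ = ZMod.χ₈ q * J(b | m) * J((2 * m : ℕ) | b) := by
      rw [jacobiSym.at_two hq_odd, jacobiSym_eq_of_modEq hm hq4 hqm,
        jacobiSym_eq_of_modEq hb hq4 hqb]
    _ = ZMod.χ₈ r * (J(b | m) * J((2 * m : ℕ) | b)) := by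
      rw [ZMod.χ₈_nat_mod_eight, hq8, ← ZMod.χ₈_nat_mod_eight, mul_assoc]
    _ = 1 := hr

theorem exists_prime_gt_isSquare_neg_mul (ha : a % 4 = 1 ∨ a % 4 = 2) (hb : Odd b)
    (hab : a.Coprime b) (B : ℕ) :
    ∃ q > B, q.Prime ∧ q % 4 = 1 ∧ q ≡ b [MOD a] ∧ q ≡ a [MOD b] ∧
      IsSquare (-(a * b) : ZMod q) := by
  obtain ⟨q, hqB, hq, hq4, hqa, hqb, hJ⟩ := ha.elim
    (exists_prime_gt_jacobiSym_mul_eq_one_of_mod_four_eq_one · hb hab B)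
    (exists_prime_gt_jacobiSym_mul_eq_one_of_mod_four_eq_two · hb hab B)
  refine ⟨q, hqB, hq, hq4, hqa, hqb, ?_⟩
  have : Fact q.Prime := ⟨hq⟩
  have hJ' : J(-(a * b) | q) = 1 := by
    rw [jacobiSym.neg _ (Nat.odd_iff.mpr (by lia)), jacobiSym.mul_left, hJ,
      ZMod.χ₄_nat_one_mod_four hq4, mul_one]
  simpa using ZMod.isSquare_of_jacobiSym_eq_one hJ'

end AuxiliaryPrime

section SumOfTwoSquares

theorem not_isSquare_mul_of_prime {n q : ℕ} (hq : q.Prime) (hn : ¬q ∣ n) :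
    ¬IsSquare (n * q) := by
  rintro ⟨r, hr⟩
  obtain ⟨s, rfl⟩ : q ∣ r := (hq.dvd_mul.mp (Dvd.intro_left n hr)).elim id id
  exact hn ⟨s * s, Nat.eq_of_mul_eq_mul_right hq.pos (by rw [hr]; ring)⟩

theorem exists_add_mul_sq_eq_sq_add_sq {a b : ℕ} (ha : a % 4 = 1 ∨ a % 4 = 2) (hb : Odd b)
    (hab : a.Coprime b) : ∃ x y z : ℚ, (a : ℚ) + b * z ^ 2 = x ^ 2 + y ^ 2 := by
  have ha0 : 0 < a := by lia
  obtain ⟨q, hqB, hq, hq4, hqa, hqb, hsq⟩ := exists_prime_gt_isSquare_neg_mul ha hb hab (a + b)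
  have hq_not_dvd {n : ℕ} (hn : 0 < n) (hle : n ≤ a + b) : ¬q ∣ n := fun h ↦ by
    have := Nat.le_of_dvd hn h
    lia
  have hqb' : ¬q ∣ b := hq_not_dvd hb.pos (by lia)
  obtain ⟨w, z, u, hu, h⟩ := exists_mul_sq_add_mul_sq_eq_mul_sq ha0 hb.pos hq.pos hab
    (hq.coprime_iff_not_dvd.mpr hqb').symm
    (hq.coprime_iff_not_dvd.mpr (hq_not_dvd ha0 (by lia)))
    ⟨b, by rw [(ZMod.natCast_eq_natCast_iff _ _ _).mpr hqa]⟩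
    ⟨a, by rw [(ZMod.natCast_eq_natCast_iff _ _ _).mpr hqb]⟩ hsq
  have hw : w ≠ 0 := by
    rintro rfl
    have hz : z ≠ 0 := by
      rintro rfl
      simp [hq.ne_zero, hu] at h
    refine not_isSquare_mul_of_prime hq hqb' (isSquare_of_mul_sq_eq_sq (y := q * u) hz ?_)
    push_cast
    linear_combination (q : ℤ) * h
  have : Fact q.Prime := ⟨hq⟩
  obtain ⟨s, t, hst⟩ := Nat.Prime.sq_add_sq (p := q) (by lia)
  have hQ : (a : ℚ) * w ^ 2 + b * z ^ 2 = q * u ^ 2 := mod_cast h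
  have hstQ : (s : ℚ) ^ 2 + t ^ 2 = q := mod_cast hst
  have hwQ : (w : ℚ) ≠ 0 := mod_cast hw
  refine ⟨s * u / w, t * u / w, z / w, ?_⟩
  field_simp
  linear_combination hQ - u ^ 2 * hstQ

end SumOfTwoSquares

section PrimitiveSolution

theorem den_dvd_of_mul_eq_intCast {x : ℚ} {n : ℕ} {m : ℤ} (h : x * n = m) : x.den ∣ n := by
  have hnum : x.num * n = m * x.den := by
    have : (x.num : ℚ) * n = m * x.den := by rw [← Rat.mul_den_eq_num, ← h]; ring
    exact_mod_cast this
  exact Int.natCast_dvd_natCast.mp (x.isCoprime_num_den.symm.dvd_of_dvd_mul_left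
    (Dvd.intro_left m hnum.symm))

theorem exists_primitive_integer_multiple {ι : Type*} [Finite ι] (x : ι → ℚ) :
    ∃ (D : ℕ) (X : ι → ℤ), (∀ i, x i * D = X i) ∧
      ∀ l : ℕ, l ∣ D → (∀ i, (l : ℤ) ∣ X i) → l = 1 := by
  have := Fintype.ofFinite ι
  let D := Finset.univ.lcm fun i ↦ (x i).den
  have hD0 : D ≠ 0 := by simp [D, Finset.lcm_eq_zero_iff]
  have hX_exists (i : ι) : ∃ X : ℤ, x i * D = X := by
    obtain ⟨c, hc⟩ : (x i).den ∣ D := Finset.dvd_lcm (Finset.mem_univ i)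
    refine ⟨(x i).num * c, ?_⟩
    rw [hc, Nat.cast_mul, ← mul_assoc, Rat.mul_den_eq_num, Int.cast_mul, Int.cast_natCast]
  choose X hX using hX_exists
  refine ⟨D, X, hX, fun l ⟨D', hD'⟩ hl ↦ ?_⟩
  obtain ⟨hl0, hD'_ne⟩ := mul_ne_zero_iff.mp (hD' ▸ hD0)
  have hden (i : ι) : (x i).den ∣ D' := by
    obtain ⟨y, hy⟩ := hl i
    have hlQ : (l : ℚ) ≠ 0 := mod_cast hl0
    refine den_dvd_of_mul_eq_intCast (m := y) (mul_left_cancel₀ hlQ ?_)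
    calc
      (l : ℚ) * (x i * D') = x i * D := by rw [hD']; push_cast; ring
      _ = l * y := by rw [hX, hy, Int.cast_mul, Int.cast_natCast]
  have hdvd : l * D' ∣ 1 * D' := by
    rw [← hD', one_mul]
    exact Finset.lcm_dvd fun i _ ↦ hden i
  exact Nat.dvd_one.mp (Nat.dvd_of_mul_dvd_mul_right (Nat.pos_of_ne_zero hD'_ne) hdvd)

theorem dvd_and_dvd_of_dvd_sq_add_sq {l : ℕ} (hl : l.Prime) (hl4 : l % 4 = 3) {x y : ℤ}
    (h : (l : ℤ) ∣ x ^ 2 + y ^ 2) : (l : ℤ) ∣ x ∧ (l : ℤ) ∣ y := by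
  have : Fact l.Prime := ⟨hl⟩
  simp only [← ZMod.intCast_zmod_eq_zero_iff_dvd] at h ⊢
  push_cast at h
  constructor
  · by_contra hx
    exact ZMod.mod_four_ne_three_of_sq_eq_neg_sq hx (eq_neg_of_add_eq_zero_left h) hl4
  · by_contra hy
    exact ZMod.mod_four_ne_three_of_sq_eq_neg_sq' hy (eq_neg_of_add_eq_zero_left h) hl4

variable {d : ℕ} {X Y K Z D : ℤ}

theorem prime_dvd_of_sq_add_sq_eq {l : ℕ} (hl : l.Prime) (hl4 : l % 4 = 3) (hld : l ∣ d)
    (hl2d : ¬l ^ 2 ∣ d) (h : X ^ 2 + Y ^ 2 = 2 * D ^ 2 + d * (K ^ 2 + Z ^ 2)) (hD : (l : ℤ) ∣ D) :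
    (l : ℤ) ∣ X ∧ (l : ℤ) ∣ Y ∧ (l : ℤ) ∣ K ∧ (l : ℤ) ∣ Z := by
  obtain ⟨e, rfl⟩ := hld
  obtain ⟨D, rfl⟩ := hD
  have hl0 : (l : ℤ) ≠ 0 := mod_cast hl.ne_zero
  have hle : ¬(l : ℤ) ∣ e := fun he ↦
    hl2d (by rw [sq]; exact mul_dvd_mul_left l (Int.natCast_dvd_natCast.mp he))
  push_cast at h
  obtain ⟨⟨X, rfl⟩, ⟨Y, rfl⟩⟩ := dvd_and_dvd_of_dvd_sq_add_sq hl hl4 (x := X) (y := Y)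
    ⟨2 * l * D ^ 2 + e * (K ^ 2 + Z ^ 2), by linear_combination h⟩
  have hKZ : (l : ℤ) ∣ e * (K ^ 2 + Z ^ 2) :=
    ⟨X ^ 2 + Y ^ 2 - 2 * D ^ 2, mul_left_cancel₀ hl0 (by linear_combination -h)⟩
  exact ⟨dvd_mul_right _ _, dvd_mul_right _ _, dvd_and_dvd_of_dvd_sq_add_sq hl hl4
    (((Nat.prime_iff_prime_int.mp hl).dvd_or_dvd hKZ).resolve_left hle)⟩

theorem sq_emod_four_eq_zero_or_sq_emod_eight_eq_one (x : ℤ) :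
    2 ∣ x ∧ x ^ 2 % 4 = 0 ∨ ¬2 ∣ x ∧ x ^ 2 % 8 = 1 := by
  rcases Int.even_or_odd x with hx | hx
  · exact .inl ⟨hx.two_dvd, Int.emod_eq_zero_of_dvd (pow_dvd_pow_of_dvd hx.two_dvd 2)⟩
  · have := Int.eight_dvd_sq_sub_one_of_odd hx
    exact .inr ⟨by rwa [← even_iff_two_dvd, Int.not_even_iff_odd], by lia⟩

theorem two_dvd_of_sq_add_sq_eq (hd : d % 4 = 3)
    (h : X ^ 2 + Y ^ 2 = 2 * D ^ 2 + d * (K ^ 2 + Z ^ 2)) (hD : 2 ∣ D) :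
    2 ∣ X ∧ 2 ∣ Y ∧ 2 ∣ K ∧ 2 ∣ Z := by
  obtain ⟨D, rfl⟩ := hD
  obtain ⟨e, he⟩ : ∃ e : ℤ, (d : ℤ) = 4 * e + 3 := ⟨(d / 4 : ℕ), by lia⟩
  have hX := sq_emod_four_eq_zero_or_sq_emod_eight_eq_one X
  have hY := sq_emod_four_eq_zero_or_sq_emod_eight_eq_one Y
  have hK := sq_emod_four_eq_zero_or_sq_emod_eight_eq_one K
  have hZ := sq_emod_four_eq_zero_or_sq_emod_eight_eq_one Z
  rw [he] at h
  obtain ⟨s, hs⟩ : 2 ∣ K ^ 2 + Z ^ 2 := by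
    have h4 : X ^ 2 + Y ^ 2 =
        4 * (2 * D ^ 2 + e * (K ^ 2 + Z ^ 2)) + 3 * (K ^ 2 + Z ^ 2) := by linear_combination h
    omega
  have h8 : X ^ 2 + Y ^ 2 = 8 * (D ^ 2 + e * s) + 3 * (K ^ 2 + Z ^ 2) := by
    linear_combination h + 4 * e * hs
  omega

theorem coprime_den_of_two_add_mul_sq_add_mul_sq_eq {k x y z : ℚ} (hd : Squarefree d)
    (hd4 : d % 4 = 3) (hprime : ∀ l, l.Prime → l ∣ d → l % 4 = 3)
    (h : 2 + d * k ^ 2 + d * z ^ 2 = x ^ 2 + y ^ 2) : k.den.Coprime (2 * d) := by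
  obtain ⟨D, X, hX, hprim⟩ := exists_primitive_integer_multiple ![x, y, k, z]
  have hform : X 0 ^ 2 + X 1 ^ 2 = 2 * (D : ℤ) ^ 2 + d * (X 2 ^ 2 + X 3 ^ 2) := by
    have : (X 0 : ℚ) ^ 2 + X 1 ^ 2 = 2 * (D : ℚ) ^ 2 + d * (X 2 ^ 2 + X 3 ^ 2) := by
      simp only [← hX, Matrix.cons_val]
      linear_combination -(D : ℚ) ^ 2 * h
    exact_mod_cast this
  refine Nat.Coprime.coprime_dvd_left (den_dvd_of_mul_eq_intCast (hX 2)) ?_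
  refine Nat.coprime_of_dvd fun l hl hlD hl2d ↦ hl.ne_one (hprim l hlD ?_)
  have hlD' : (l : ℤ) ∣ D := Int.natCast_dvd_natCast.mpr hlD
  suffices (l : ℤ) ∣ X 0 ∧ (l : ℤ) ∣ X 1 ∧ (l : ℤ) ∣ X 2 ∧ (l : ℤ) ∣ X 3 by
    simpa [Fin.forall_fin_succ] using this
  rcases hl.dvd_mul.mp hl2d with hl2 | hld
  · obtain rfl := (Nat.prime_dvd_prime_iff_eq hl Nat.prime_two).mp hl2
    exact two_dvd_of_sq_add_sq_eq hd4 hform hlD'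
  · exact prime_dvd_of_sq_add_sq_eq hl (hprime l hl hld) hld
      (fun hl2 ↦ hl.not_isUnit (hd l (sq l ▸ hl2))) hform hlD'

end PrimitiveSolution

theorem two_mul_sq_add_mul_sq_mod_four {d n : ℕ} (hd : d % 4 = 3) (hn : Odd n) (m : ℕ) :
    (2 * n ^ 2 + d * m ^ 2) % 4 = 1 ∨ (2 * n ^ 2 + d * m ^ 2) % 4 = 2 := by
  have hn2 : n ^ 2 % 2 = 1 := Nat.odd_iff.mp hn.pow
  have hm2 : m ^ 2 % 4 = 0 ∨ m ^ 2 % 4 = 1 := by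
    have := sq_emod_four_eq_zero_or_sq_emod_eight_eq_one m
    lia
  have hdm : d * m ^ 2 % 4 = 3 * (m ^ 2 % 4) % 4 := by rw [Nat.mul_mod, hd]
  lia

theorem exists_two_add_mul_sq_add_mul_sq_eq {d : ℕ} (hd4 : d % 4 = 3) {k : ℚ}
    (hk : k.den.Coprime (2 * d)) :
    ∃ x y z : ℚ, 2 + (d : ℚ) * k ^ 2 + d * z ^ 2 = x ^ 2 + y ^ 2 := by
  set m := k.num.natAbs
  set n := k.den
  have hd : Odd d := Nat.odd_iff.mpr (by lia)
  have hn : Odd n := Nat.coprime_two_right.mp hk.coprime_mul_right_right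
  have hcop : (2 * n ^ 2 + d * m ^ 2).Coprime d := by
    rw [Nat.coprime_add_mul_left_left]
    exact (Nat.coprime_two_left.mpr hd).mul_left (hk.coprime_mul_left_right.pow_left 2)
  obtain ⟨x, y, z, h⟩ :=
    exists_add_mul_sq_eq_sq_add_sq (two_mul_sq_add_mul_sq_mod_four hd4 hn m) hd hcop
  have hkn : k ^ 2 * n ^ 2 = m ^ 2 := by
    rw [← mul_pow, Rat.mul_den_eq_num, Nat.cast_natAbs, Int.cast_abs, sq_abs]
  have hn0 : (n : ℚ) ≠ 0 := mod_cast k.den_nz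
  refine ⟨x / n, y / n, z / n, ?_⟩
  push_cast at h
  field_simp
  linear_combination h + d * hkn

theorem robinson_key_lemma_general (d : ℕ) (hd : Squarefree d) (hd4 : d % 4 = 3)
    (hprime : ∀ l, l.Prime → l ∣ d → l % 4 = 3) (k : ℚ) :
    (∃ x y z : ℚ, 2 + (d : ℚ) * k ^ 2 + (d : ℚ) * z ^ 2 = x ^ 2 + y ^ 2) ↔
      k.den.Coprime (2 * d) :=
  ⟨fun ⟨_, _, _, h⟩ ↦ coprime_den_of_two_add_mul_sq_add_mul_sq_eq hd hd4 hprime h,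
    exists_two_add_mul_sq_add_mul_sq_eq hd4⟩

/-- Key lemma for Julia Robinson's definition of ℤ in ℚ:
for a prime `p ≡ 3 mod 4` and `k ∈ ℚ`, the quadratic condition
`∃ x y z, 2 + p k² + p z² = x² + y²` holds iff `v_p(k) ≥ 0` and `v_2(k) ≥ 0`,
i.e., the denominator of `k` is divisible neither by `p` nor by `2`. -/
theorem robinson_key_lemma (p : ℕ) (hp : p.Prime) (hp4 : p % 4 = 3) (k : ℚ) :
    (∃ x y z : ℚ, 2 + (p : ℚ) * k ^ 2 + (p : ℚ) * z ^ 2 = x ^ 2 + y ^ 2) ↔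
      (¬ p ∣ k.den ∧ ¬ 2 ∣ k.den) := by
  rw [robinson_key_lemma_general p hp.prime.squarefree hp4
    (fun l hl hlp ↦ (Nat.prime_dvd_prime_iff_eq hl hp).mp hlp ▸ hp4), Nat.coprime_mul_iff_right,
    Nat.coprime_comm, Nat.prime_two.coprime_iff_not_dvd, Nat.coprime_comm, hp.coprime_iff_not_dvd,
    and_comm]
end

section
/- Let K be a number field with ring of integers 𝓞_K. Then the set {x ∈ 𝓞_K : x is the image of some natural number n ∈ ℕ} is first-order definable in the ring 𝓞_K in the language of rings {+, ·, 0, 1}, with parameters from 𝓞_K. -/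
open FirstOrder Language Ring

/-!
Call a family of finite sets rich if it contains every initial segment `{0, …, n}` of `ℕ`. If a
rich family is uniformly definable, then so is `ℕ`: `x` is a natural number iff some member contains
`0` and is closed under `y ↦ y + 1` except possibly at `y = x`, since otherwise that member would
contain all of `ℕ`.

In an order `R` of rank `d` over `ℤ` such a family is obtained in two steps. For `f ≠ 0` only
finitely many `x` satisfy `x + 1, …, x + d ∣ f`, because the norms of these `d` elements, all
divisors of the norm of `f`, determine the characteristic polynomial of `x`. Inside a finite set a
subset is cut out as with Gödel's `β`-function: if `g` is divisible by all differences of its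
elements, the `1 + (x + 1) * g` are pairwise coprime. Let `h` be their product over all `x` outside
the subset. If the subset consists of natural numbers, then `1 + (x + 1) * g` is not a unit for `x`
in it, hence does not divide `h`.
-/

section Norm

variable {A B : Type*} [CommRing A] [CommRing B] [Algebra A B] [Module.Free A B] [Module.Finite A B]

theorem eval_charpoly_lmul (a : A) (x : B) :
    (Algebra.lmul A B x).charpoly.eval a = Algebra.norm A (algebraMap A B a - x) := by
  rw [LinearMap.eval_charpoly, Algebra.norm_apply, map_sub (Algebra.lmul A B), AlgHom.commutes]

theorem charpoly_lmul_eq_of_norm_sub_eq [IsDomain A] {s : Finset A}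
    (hs : Module.finrank A B ≤ s.card) {x y : B}
    (h : ∀ a ∈ s, Algebra.norm A (algebraMap A B a - x) = Algebra.norm A (algebraMap A B a - y)) :
    (Algebra.lmul A B x).charpoly = (Algebra.lmul A B y).charpoly := by
  have degree_eq (z : B) : (Algebra.lmul A B z).charpoly.degree = Module.finrank A B := by
    rw [Polynomial.degree_eq_natDegree (LinearMap.charpoly_monic _).ne_zero,
      LinearMap.charpoly_natDegree]
  refine Polynomial.eq_of_degree_le_of_eval_finset_eq s ?_ ?_ ?_ fun a ha => ?_
  · rw [degree_eq]
    exact_mod_cast hs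
  · rw [degree_eq, degree_eq]
  · rw [LinearMap.charpoly_monic, LinearMap.charpoly_monic]
  · rw [eval_charpoly_lmul, eval_charpoly_lmul, h a ha]

theorem finite_setOf_charpoly_lmul_eq [IsDomain B] (p : Polynomial A) :
    {x : B | (Algebra.lmul A B x).charpoly = p}.Finite := by
  refine (p.rootSet_finite B).subset ?_
  rintro x rfl
  exact Polynomial.mem_rootSet'.2
    ⟨((LinearMap.charpoly_monic _).map _).ne_zero, Algebra.aeval_self_charpoly_lmul x⟩

theorem finite_setOf_norm_sub_mem [IsDomain A] [IsDomain B] {s : Finset A}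
    (hs : Module.finrank A B ≤ s.card) {t : Set A} (ht : t.Finite) :
    {x : B | ∀ a ∈ s, Algebra.norm A (algebraMap A B a - x) ∈ t}.Finite := by
  let normAt (x : B) (a : s) : A := Algebra.norm A (algebraMap A B a - x)
  refine Set.Finite.of_finite_fibers normAt ?_ ?_
  · refine (Set.Finite.pi' fun _ : s => ht).subset ?_
    rintro _ ⟨x, hx, rfl⟩ a
    exact hx a a.2
  · rintro _ ⟨x, -, rfl⟩
    refine (finite_setOf_charpoly_lmul_eq (Algebra.lmul A B x).charpoly).subset ?_
    rintro y ⟨-, hy : normAt y = normAt x⟩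
    exact charpoly_lmul_eq_of_norm_sub_eq hs fun a ha => congrFun hy ⟨a, ha⟩

end Norm

theorem finite_setOf_forall_add_dvd {R : Type*} [CommRing R] [IsDomain R] [CharZero R]
    [Module.Finite ℤ R] {s : Finset ℤ} (hs : Module.finrank ℤ R ≤ s.card) {f : R} (hf : f ≠ 0) :
    {x : R | ∀ a ∈ s, x + (a : R) ∣ f}.Finite := by
  have norm_ne_zero : Algebra.norm ℤ f ≠ 0 := Algebra.norm_ne_zero_iff.mpr hf
  refine ((finite_setOf_norm_sub_mem hs (Algebra.norm ℤ f).divisors.finite_toSet).preimage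
    neg_injective.injOn).subset fun x hx a ha => ?_
  have norm_dvd : Algebra.norm ℤ (x + (a : R)) ∣ Algebra.norm ℤ f := map_dvd _ (hx a ha)
  simpa [norm_ne_zero, add_comm] using norm_dvd

section Coding

variable {R : Type*} [CommRing R]

theorem isCoprime_one_add_mul_of_sub_dvd {x y g : R} (h : x - y ∣ g) :
    IsCoprime (1 + x * g) (1 + y * g) := by
  have coprime_g : IsCoprime (1 + x * g) g := ⟨1, -x, by ring⟩
  have coprime_sub : IsCoprime (1 + x * g) (x - y) := coprime_g.of_isCoprime_of_dvd_right h
  have coprime_add : IsCoprime (1 + x * g) (-((x - y) * g) + (1 + x * g) * 1) :=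
    (coprime_sub.mul_right coprime_g).neg_right.add_mul_left_right 1
  convert coprime_add using 1
  ring

variable [Algebra.IsIntegral ℤ R]

theorem isUnit_natCast_iff_eq_one [CharZero R] {n : ℕ} : IsUnit (n : R) ↔ n = 1 := by
  rw [← map_natCast (algebraMap ℤ R), isUnit_map_iff, Int.isUnit_iff]
  omega

variable [IsDomain R]

theorem exists_natCast_ne_zero_dvd {x : R} (hx : x ≠ 0) : ∃ n : ℕ, n ≠ 0 ∧ x ∣ (n : R) := by
  obtain ⟨z, hz, hxz⟩ := (Algebra.IsIntegral.isIntegral (R := ℤ) x).isAlgebraic.exists_nonzero_dvd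
    (mem_nonZeroDivisors_of_ne_zero hx)
  refine ⟨z.natAbs, Int.natAbs_ne_zero.mpr hz, hxz.trans ?_⟩
  simpa using map_dvd (algebraMap ℤ R) (Int.dvd_natAbs_self (a := z))

theorem exists_natCast_ne_zero_forall_dvd {T : Set R} (hT : T.Finite) :
    ∃ N : ℕ, N ≠ 0 ∧ ∀ x ∈ T, x ≠ 0 → x ∣ (N : R) := by
  choose! multiple multiple_ne_zero dvd_multiple using
    fun x : R => exists_natCast_ne_zero_dvd (x := x)
  have finite_nonzero : (T \ {0}).Finite := hT.sdiff
  refine ⟨∏ x ∈ finite_nonzero.toFinset, multiple x, Finset.prod_ne_zero_iff.mpr fun x hx =>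
    multiple_ne_zero x (finite_nonzero.mem_toFinset.mp hx).2, fun x hx hx0 => ?_⟩
  exact (dvd_multiple x hx0).trans (Nat.cast_dvd_cast
    (Finset.dvd_prod_of_mem multiple (finite_nonzero.mem_toFinset.mpr ⟨hx, hx0⟩)))

open scoped Pointwise in
theorem exists_forall_mem_one_add_mul_dvd_iff [CharZero R] {T : Set R} (hT : T.Finite) (A : Set ℕ) :
    ∃ g h : R, ∀ x ∈ T, 1 + (x + 1) * g ∣ h ↔ x ∉ ((↑) '' A : Set R) := by
  obtain ⟨N, N_ne_zero, sub_dvd⟩ := exists_natCast_ne_zero_forall_dvd (hT.sub hT)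
  have finite_diff : (T \ (↑) '' A).Finite := hT.sdiff
  refine ⟨N, ∏ y ∈ finite_diff.toFinset, (1 + (y + 1) * N), fun x hx => ⟨?_, fun hxA => ?_⟩⟩
  · rintro dvd_prod ⟨k, hk, rfl⟩
    have coprime_prod : IsCoprime (1 + ((k : R) + 1) * N)
        (∏ y ∈ finite_diff.toFinset, (1 + (y + 1) * N)) := by
      refine IsCoprime.prod_right fun y hy => isCoprime_one_add_mul_of_sub_dvd ?_
      obtain ⟨hyT, hyA⟩ := finite_diff.mem_toFinset.mp hy
      have hky : (k : R) ≠ y := fun h => hyA ⟨k, hk, h⟩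
      rw [add_sub_add_right_eq_sub]
      exact sub_dvd _ (Set.sub_mem_sub hx hyT) (sub_ne_zero.mpr hky)
    have isUnit_natCast : IsUnit ((1 + (k + 1) * N : ℕ) : R) := by
      simpa using coprime_prod.isUnit_of_dvd' dvd_rfl dvd_prod
    simpa [N_ne_zero] using isUnit_natCast_iff_eq_one.mp isUnit_natCast
  · exact Finset.dvd_prod_of_mem (fun y => 1 + (y + 1) * (N : R))
      (finite_diff.mem_toFinset.mpr ⟨hx, hxA⟩)

end Coding

/-- The member with parameters `f`, `g`, `h` of the definable family of finite sets that contains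
all initial segments of `ℕ`: the first two conditions confine `x` to a finite set when `d` is at
least the rank of `R`, the last one selects a subset as in Gödel's `β`-function. Requiring `f ≠ 0`
inside the definition makes the set empty, rather than possibly infinite, for `f = 0`. -/
def codedSet {R : Type*} [CommRing R] (d : ℕ) (f g h : R) : Set R :=
  {x | f ≠ 0 ∧ (∀ i ∈ Finset.Icc 1 d, x + (i : R) ∣ f) ∧ ¬ 1 + (x + 1) * g ∣ h}

section CodedSet

variable {R : Type*} [CommRing R] [IsDomain R] [CharZero R] [Module.Finite ℤ R]

theorem finite_setOf_forall_add_natCast_dvd {d : ℕ} (hd : Module.finrank ℤ R ≤ d) {f : R}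
    (hf : f ≠ 0) : {x : R | ∀ i ∈ Finset.Icc 1 d, x + (i : R) ∣ f}.Finite := by
  have hs : Module.finrank ℤ R ≤ ((Finset.Icc 1 d).map Nat.castEmbedding : Finset ℤ).card := by
    simpa using hd
  refine (finite_setOf_forall_add_dvd hs hf).subset fun x hx a ha => ?_
  obtain ⟨i, hi, rfl⟩ := Finset.mem_map.mp ha
  simpa using hx i hi

theorem finite_codedSet {d : ℕ} (hd : Module.finrank ℤ R ≤ d) (f g h : R) :
    (codedSet d f g h).Finite := by
  by_cases hf : f = 0
  · simp [codedSet, hf]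
  · exact (finite_setOf_forall_add_natCast_dvd hd hf).subset fun x hx => hx.2.1

theorem exists_codedSet_eq_image_Iic {d : ℕ} (hd : Module.finrank ℤ R ≤ d) (n : ℕ) :
    ∃ f g h : R, codedSet d f g h = (↑) '' Set.Iic n := by
  have factorial_ne_zero : ((n + d).factorial : R) ≠ 0 := mod_cast (n + d).factorial_ne_zero
  obtain ⟨g, h, dvd_iff⟩ := exists_forall_mem_one_add_mul_dvd_iff
    (finite_setOf_forall_add_natCast_dvd hd factorial_ne_zero) (Set.Iic n)
  refine ⟨(n + d).factorial, g, h, Set.ext fun x => ⟨?_, ?_⟩⟩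
  · rintro ⟨-, hx, not_dvd⟩
    exact not_not.mp (mt (dvd_iff x hx).mpr not_dvd)
  · intro hxn
    suffices hx : ∀ i ∈ Finset.Icc 1 d, x + (i : R) ∣ ((n + d).factorial : R) from
      ⟨factorial_ne_zero, hx, fun dvd => (dvd_iff x hx).mp dvd hxn⟩
    obtain ⟨k, hk : k ≤ n, rfl⟩ := hxn
    intro i hi
    obtain ⟨one_le, le_d⟩ := Finset.mem_Icc.mp hi
    exact_mod_cast Nat.cast_dvd_cast (α := R) (Nat.dvd_factorial (by omega) (by omega))

end CodedSet

theorem mem_range_natCast_iff_exists_mem {R ι : Type*} [AddMonoidWithOne R] [CharZero R]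
    {S : ι → Set R} (finite : ∀ i, (S i).Finite)
    (exists_eq_image_Iic : ∀ n : ℕ, ∃ i, S i = (↑) '' Set.Iic n) (x : R) :
    x ∈ Set.range ((↑) : ℕ → R) ↔ ∃ i, 0 ∈ S i ∧ ∀ y ∈ S i, y = x ∨ y + 1 ∈ S i := by
  constructor
  · rintro ⟨n, rfl⟩
    obtain ⟨i, hi⟩ := exists_eq_image_Iic n
    refine ⟨i, hi ▸ ⟨0, n.zero_le, Nat.cast_zero⟩, hi ▸ ?_⟩
    rintro _ ⟨k, hk : k ≤ n, rfl⟩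
    rcases hk.eq_or_lt with rfl | k_lt
    · exact Or.inl rfl
    · exact Or.inr ⟨k + 1, k_lt, Nat.cast_succ k⟩
  · rintro ⟨i, zero_mem, succ_mem⟩
    by_contra hx
    have natCast_mem (n : ℕ) : (n : R) ∈ S i := by
      induction n with
      | zero => simpa using zero_mem
      | succ n ih =>
        rw [Nat.cast_succ]
        exact (succ_mem n ih).resolve_left fun h => hx ⟨n, h⟩
    exact Set.infinite_range_of_injective Nat.cast_injective
      ((finite i).subset (Set.range_subset_iff.mpr natCast_mem))

theorem mem_range_natCast_iff_exists_codedSet {R : Type*} [CommRing R] [IsDomain R] [CharZero R]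
    [Module.Finite ℤ R] {d : ℕ} (hd : Module.finrank ℤ R ≤ d) (x : R) :
    x ∈ Set.range ((↑) : ℕ → R) ↔ ∃ f g h : R, 0 ∈ codedSet d f g h ∧
      ∀ y ∈ codedSet d f g h, y = x ∨ y + 1 ∈ codedSet d f g h := by
  simpa only [Prod.exists] using
    mem_range_natCast_iff_exists_mem (S := fun p : R × R × R => codedSet d p.1 p.2.1 p.2.2)
      (fun p => finite_codedSet hd p.1 p.2.1 p.2.2)
      (fun n => by simpa only [Prod.exists] using exists_codedSet_eq_image_Iic hd n) x

section Formulas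

variable {α : Type*} {n : ℕ}

/-- The formula `s ∣ t`. -/
noncomputable def dvdFormula (s t : Language.ring.Term (α ⊕ Fin n)) :
    Language.ring.BoundedFormula α n :=
  ∃' (t.relabel (Sum.map id Fin.castSucc) ='
    (s.relabel (Sum.map id Fin.castSucc) * &(Fin.last n)))

/-- The formula `x ∈ codedSet d f g h`. -/
noncomputable def memCodedSetFormula (d : ℕ) (f g h x : Language.ring.Term (α ⊕ Fin n)) :
    Language.ring.BoundedFormula α n :=
  ∼(f =' 0) ⊓
    (BoundedFormula.iInf (fun i : Finset.Icc 1 d => dvdFormula (x + termOfFreeCommRing i) f) ⊓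
      ∼(dvdFormula (1 + (x + 1) * g) h))

/-- The formula defining `ℕ` in orders of rank at most `d`. The bound variables `&0`, `&1`, `&2`
are the parameters `f`, `g`, `h` of a coded set and `&3` ranges over its elements. -/
noncomputable def natFormula (d : ℕ) : Language.ring.Formula (Fin 1) :=
  ∃' ∃' ∃' (memCodedSetFormula d (&0) (&1) (&2) 0 ⊓
    ∀' (memCodedSetFormula d (&0) (&1) (&2) (&3) ⟹
      ((&3 =' Term.var (Sum.inl 0)) ⊔ memCodedSetFormula d (&0) (&1) (&2) (&3 + 1))))

variable {R : Type*} [CommRing R] [CompatibleRing R]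

theorem realize_dvdFormula (s t : Language.ring.Term (α ⊕ Fin n)) (v : α → R) (w : Fin n → R) :
    (dvdFormula s t).Realize v w ↔ s.realize (Sum.elim v w) ∣ t.realize (Sum.elim v w) := by
  have elim_snoc (y : R) :
      Sum.elim v (Fin.snoc w y : Fin (n + 1) → R) ∘ Sum.map id Fin.castSucc = Sum.elim v w := by
    ext (i | i) <;> simp
  simp [dvdFormula, Term.realize_relabel, elim_snoc, dvd_def]

theorem realize_memCodedSetFormula (d : ℕ) (f g h x : Language.ring.Term (α ⊕ Fin n)) (v : α → R)
    (w : Fin n → R) :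
    (memCodedSetFormula d f g h x).Realize v w ↔
      x.realize (Sum.elim v w) ∈ codedSet d (f.realize (Sum.elim v w))
        (g.realize (Sum.elim v w)) (h.realize (Sum.elim v w)) := by
  simp [memCodedSetFormula, codedSet, realize_dvdFormula]

theorem realize_natFormula (d : ℕ) (v : Fin 1 → R) :
    (natFormula d).Realize v ↔ ∃ f g h : R, 0 ∈ codedSet d f g h ∧
      ∀ y ∈ codedSet d f g h, y = v 0 ∨ y + 1 ∈ codedSet d f g h := by
  simp only [natFormula, Formula.Realize, BoundedFormula.realize_ex, BoundedFormula.realize_inf,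
    BoundedFormula.realize_all, BoundedFormula.realize_imp, BoundedFormula.realize_sup,
    BoundedFormula.realize_bdEqual, realize_memCodedSetFormula, realize_add, realize_zero,
    realize_one, Term.realize_var, Sum.elim_inl]
  -- The assignments of `&0`, …, `&3` built by `Fin.snoc` evaluate definitionally.
  rfl

end Formulas

theorem nat_definable_in_ring_of_integers_general (R : Type*) [CommRing R] [IsDomain R] [CharZero R]
    [Module.Finite ℤ R] [CompatibleRing R] :
    (∅ : Set R).Definable₁ Language.ring (Set.range ((↑) : ℕ → R)) :=
  Set.empty_definable_iff.mpr ⟨natFormula (Module.finrank ℤ R), Set.ext fun v =>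
    (mem_range_natCast_iff_exists_codedSet le_rfl (v 0)).trans (realize_natFormula _ v).symm⟩

/-- For any number field `K`, the image of `ℕ` in the ring of integers `𝓞_K` is
first-order definable in `𝓞_K` in the language of rings, with parameters from `𝓞_K`. -/
theorem nat_definable_in_ring_of_integers (K : Type*) [Field K] [NumberField K] :
    letI := compatibleRingOfRing (NumberField.RingOfIntegers K)
    ∃ (m : ℕ) (θ : Language.ring.Formula (Fin (m + 1)))
      (c : Fin m → NumberField.RingOfIntegers K),
      ∀ x : NumberField.RingOfIntegers K,
        (∃ n : ℕ, (n : NumberField.RingOfIntegers K) = x) ↔ θ.Realize (Fin.cons x c) := by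
  let := compatibleRingOfRing (NumberField.RingOfIntegers K)
  obtain ⟨θ, hθ⟩ := Set.empty_definable_iff.mp
    (nat_definable_in_ring_of_integers_general (NumberField.RingOfIntegers K))
  exact ⟨0, θ, Fin.elim0, fun x => Set.ext_iff.mp hθ (Fin.cons x Fin.elim0)⟩
end
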